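/- Fix an integer r ≥ 1. For an integer l and an integer n ≥ 1 let d(l,n) ∈ ℕ^r be the dimension vector of E_l[n], i.e. for each v ∈ {1,…,r}, d(l,n)_v = #{s : 0 ≤ s ≤ n-1 and l + s ≡ v (mod r)}. For a finite multiset S of pairs (l,n) with 1 ≤ l ≤ r and n ≥ 1, let X_S = ∏_{(l,n) ∈ S} X(l,n) ∈ ℚ(x_1,…,x_r) and d(S) = Σ_{(l,n) ∈ S} d(l,n) ∈ ℕ^r (so X_S = X_{T} for the module T = ⊕_{(l,n)∈S} E_l[n] and d(S) is its dimension vector). Write e ≺ f for e, f ∈ ℕ^r if e_v ≤ f_v for all v and e ≠ f. Then for any two finite multisets S, T of such pairs with d(S) = d(T), there exist finitely many multisets R_1,…,R_N of such pairs with d(R_t) ≺ d(T) for all t, and integers a_1,…,a_N, such that X_S = X_T + Σ_{t=1}^{N} a_t · X_{R_t}. -/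

import Mathlib

/-- The ambient field `ℚ(x_1, …, x_r)`, realized as the fraction field of the
polynomial ring over `ℚ` in variables indexed by `ZMod r` (so indices are
automatically read modulo `r`). -/
noncomputable abbrev CyclicField (r : ℕ) : Type :=
  FractionRing (MvPolynomial (ZMod r) ℚ)

/-- The variable `x_i` for `i : ℤ`, with `x_{i+r} = x_i`. -/
noncomputable def xv (r : ℕ) (i : ℤ) : CyclicField r :=
  algebraMap (MvPolynomial (ZMod r) ℚ) (CyclicField r) (MvPolynomial.X (i : ZMod r))

/-- The generalized cluster variable `X(l, n)` (the image of the indecomposable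
nilpotent representation `E_l[n]` under the Caldero–Chapoton map):
`X(l,0) = 1` and, for `n ≥ 1`,
`X(l,n) = x_{l+n}/x_l + Σ_{k=1}^{n-1} (x_{l+n}·x_{l+r-1})/(x_{l+k-1}·x_{l+k}) + x_{l+r-1}/x_{l+n-1}`. -/
noncomputable def Xgcv (r : ℕ) (l : ℤ) : ℕ → CyclicField r
  | 0 => 1
  | n + 1 =>
      xv r (l + n + 1) / xv r l
        + ∑ k ∈ Finset.Icc 1 n,
            (xv r (l + n + 1) * xv r (l + r - 1)) / (xv r (l + k - 1) * xv r (l + k))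
        + xv r (l + r - 1) / xv r (l + n)

/-- The dimension vector of `E_l[n]`: its coordinate at the vertex `v : ZMod r` is
`#{s : 0 ≤ s ≤ n-1, l + s ≡ v (mod r)}`. -/
def dimVec (r : ℕ) (l : ℤ) (n : ℕ) : ZMod r → ℕ :=
  fun v => ((Finset.range n).filter fun (s : ℕ) => ((l + (s : ℤ)) : ZMod r) = v).card

/-- The generalized cluster variable of the direct sum `⊕_{(l,n) ∈ S} E_l[n]`
attached to a finite multiset `S` of pairs `(l, n)`. -/
noncomputable def XMul (r : ℕ) (S : Multiset (ℤ × ℕ)) : CyclicField r :=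
  (S.map fun p => Xgcv r p.1 p.2).prod

/-- The dimension vector of the direct sum `⊕_{(l,n) ∈ S} E_l[n]`. -/
def dimMul (r : ℕ) (S : Multiset (ℤ × ℕ)) : ZMod r → ℕ :=
  fun v => (S.map fun p => dimVec r p.1 p.2 v).sum

/-- A multiset of pairs `(l, n)` is admissible if `1 ≤ l ≤ r` and `n ≥ 1` throughout. -/
def Admissible (r : ℕ) (S : Multiset (ℤ × ℕ)) : Prop :=
  ∀ p ∈ S, 1 ≤ p.1 ∧ p.1 ≤ (r : ℤ) ∧ 1 ≤ p.2

/-- The strict coordinatewise order `e ≺ f` on dimension vectors. -/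
def DimLT (r : ℕ) (e f : ZMod r → ℕ) : Prop :=
  (∀ v, e v ≤ f v) ∧ e ≠ f

section helpers

lemma xv_ne (r : ℕ) (i : ℤ) : xv r i ≠ 0 := by
  unfold xv
  intro h
  have := (IsFractionRing.injective (MvPolynomial (ZMod r) ℚ) (CyclicField r))
    (h.trans (map_zero _).symm)
  exact MvPolynomial.X_ne_zero _ this

lemma xv_congr (r : ℕ) {i j : ℤ} (h : (i : ZMod r) = j) : xv r i = xv r j := by
  unfold xv; rw [h]

lemma sum_Icc_aux {A : Type*} [AddCommGroup A] (f : ℕ → A) (n : ℕ) :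
    ∑ k ∈ Finset.range (n + 1), f k = f 0 + ∑ k ∈ Finset.Icc 1 n, f k := by
  induction n with
  | zero => simp
  | succ n ih => rw [Finset.sum_range_succ, ih, Finset.sum_Icc_succ_top (by omega), add_assoc]

lemma Xgcv_eq (r : ℕ) (l : ℤ) (n : ℕ) :
    Xgcv r l n = xv r (l + n) * xv r (l - 1) *
      ∑ k ∈ Finset.range (n + 1), 1 / (xv r (l + k - 1) * xv r (l + k)) := by
  have h1 : ∀ m : ℤ, xv r (m + r - 1) = xv r (m - 1) := fun m => xv_congr r (by simp)
  cases n with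
  | zero =>
    have := xv_ne r l
    have := xv_ne r (l - 1)
    simp [Xgcv]
    field_simp
  | succ n =>
    have a1 := xv_ne r l
    have a2 := xv_ne r (l - 1)
    have a3 := xv_ne r (l + n)
    have a4 := xv_ne r (l + n + 1)
    have e1 : l + ((n + 1 : ℕ) : ℤ) = l + n + 1 := by push_cast; ring
    have e2 : l + (n : ℤ) + 1 - 1 = l + n := by ring
    simp only [Xgcv, h1]
    rw [Finset.sum_range_succ, sum_Icc_aux, e1, e2, mul_add, mul_add, Finset.mul_sum]
    simp only [Nat.cast_zero, add_zero]
    congr 1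
    · congr 1
      · field_simp
      · refine Finset.sum_congr rfl fun k _ => ?_
        rw [mul_one_div]
    · field_simp

lemma Xgcv_rec (r : ℕ) (l : ℤ) (n : ℕ) :
    Xgcv r l (n + 2) = Xgcv r l (n + 1) * Xgcv r (l + n + 1) 1 - Xgcv r l n := by
  have e1 : l + ((n + 1 : ℕ) : ℤ) = l + n + 1 := by push_cast; ring
  have e2 : l + ((n + 2 : ℕ) : ℤ) = l + n + 2 := by push_cast; ring
  have e3 : l + (n : ℤ) + 1 - 1 = l + n := by ring
  have e4 : l + (n : ℤ) + 2 - 1 = l + n + 1 := by ring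
  have e5 : l + (n : ℤ) + 1 + 1 = l + n + 2 := by ring
  have a3 := xv_ne r (l + n)
  have a4 := xv_ne r (l + n + 1)
  have a5 := xv_ne r (l + n + 2)
  simp only [Xgcv_eq]
  rw [Finset.sum_range_succ _ (n + 2), Finset.sum_range_succ _ (n + 1)]
  simp only [Finset.sum_range_succ _ 1, Finset.sum_range_one, e1, e2, e3, e4, e5,
    Nat.cast_zero, Nat.cast_one, add_zero]
  generalize ∑ x ∈ Finset.range (n + 1), 1 / (xv r (l + x - 1) * xv r (l + x)) = s
  field_simp
  ring

variable {r : ℕ}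

/-- representative of `v` in `1..r` -/
def rep (r : ℕ) (v : ZMod r) : ℤ := if v.val = 0 then r else v.val

lemma rep_cast [NeZero r] (v : ZMod r) : ((rep r v : ℤ) : ZMod r) = v := by
  unfold rep
  split_ifs with h
  · rw [ZMod.val_eq_zero] at h
    simp [h]
  · simp

lemma rep_bounds [NeZero r] (v : ZMod r) : 1 ≤ rep r v ∧ rep r v ≤ r := by
  have := ZMod.val_lt v
  have := NeZero.pos r
  unfold rep
  split_ifs with h <;> omega

/-- the simple variable at `v` -/
noncomputable def yv (r : ℕ) (v : ZMod r) : CyclicField r := Xgcv r (rep r v) 1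

lemma Xgcv_one [NeZero r] (l : ℤ) : Xgcv r l 1 = yv r (l : ZMod r) := by
  simp only [yv, Xgcv_eq]
  have h : ∀ (k : ℤ), xv r (l + k) = xv r (rep r (l : ZMod r) + k) := fun k =>
    xv_congr r (by push_cast; rw [rep_cast])
  have hb : ∀ (k : ℤ), xv r (l + k - 1) = xv r (rep r (l : ZMod r) + k - 1) := fun k =>
    xv_congr r (by push_cast; rw [rep_cast])
  have hc : xv r (l - 1) = xv r (rep r (l : ZMod r) - 1) :=
    xv_congr r (by push_cast; rw [rep_cast])
  simp only [h, hb, hc]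

/-- monomials in simples -/
noncomputable def mon (r : ℕ) [NeZero r] (d : ZMod r → ℕ) : CyclicField r :=
  ∏ v, yv r v ^ d v

/-- combinations of strictly smaller monomials -/
noncomputable def ltSpan (r : ℕ) [NeZero r] (d : ZMod r → ℕ) : Submodule ℤ (CyclicField r) :=
  Submodule.span ℤ (Set.image (mon r) {e | e < d})

/-- combinations of smaller or equal monomials -/
noncomputable def leSpan (r : ℕ) [NeZero r] (d : ZMod r → ℕ) : Submodule ℤ (CyclicField r) :=
  Submodule.span ℤ (Set.image (mon r) {e | e ≤ d})

lemma mon_add [NeZero r] (d e : ZMod r → ℕ) : mon r (d + e) = mon r d * mon r e := by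
  simp [mon, pow_add, Finset.prod_mul_distrib]

lemma ltSpan_le [NeZero r] (d : ZMod r → ℕ) : ltSpan r d ≤ leSpan r d :=
  Submodule.span_mono (Set.image_mono fun e (h : e < d) => show e ≤ d from h.le)

lemma leSpan_le_ltSpan [NeZero r] {d e : ZMod r → ℕ} (h : d < e) : leSpan r d ≤ ltSpan r e :=
  Submodule.span_mono (Set.image_mono fun _ (hb : _ ≤ _) => (lt_of_le_of_lt hb h : _ < _))

lemma mon_mem [NeZero r] (d : ZMod r → ℕ) : mon r d ∈ leSpan r d :=
  Submodule.subset_span ⟨d, (le_refl d : d ≤ d), rfl⟩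

lemma ltSpan_mul [NeZero r] {d e : ZMod r → ℕ} {a b : CyclicField r} (ha : a ∈ ltSpan r d)
    (hb : b ∈ leSpan r e) : a * b ∈ ltSpan r (d + e) := by
  rw [ltSpan] at ha
  rw [leSpan] at hb
  induction ha using Submodule.span_induction with
  | zero => simp
  | add x y _ _ hx hy => rw [add_mul]; exact Submodule.add_mem _ hx hy
  | smul c x _ hx => rw [smul_mul_assoc]; exact Submodule.smul_mem _ _ hx
  | mem x hx =>
    obtain ⟨p, hp, rfl⟩ := hx
    induction hb using Submodule.span_induction with
    | zero => simp
    | add x y _ _ hx hy => rw [mul_add]; exact Submodule.add_mem _ hx hy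
    | smul c x _ hx => rw [mul_smul_comm]; exact Submodule.smul_mem _ _ hx
    | mem x hx =>
      obtain ⟨q, hq, rfl⟩ := hx
      have hlt : p + q < d + e := add_lt_add_of_lt_of_le hp hq
      exact Submodule.subset_span ⟨p + q, hlt, mon_add p q⟩

lemma mem_leSpan [NeZero r] {d : ZMod r → ℕ} {a : CyclicField r} (h : a - mon r d ∈ ltSpan r d) :
    a ∈ leSpan r d := by
  have := Submodule.add_mem _ (ltSpan_le d h) (mon_mem d)
  simpa using this

lemma lead_mul [NeZero r] {d e : ZMod r → ℕ} {a b : CyclicField r} (ha : a - mon r d ∈ ltSpan r d)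
    (hb : b - mon r e ∈ ltSpan r e) : a * b - mon r (d + e) ∈ ltSpan r (d + e) := by
  have h1 := ltSpan_mul ha (mem_leSpan hb)
  have h2 := ltSpan_mul hb (mon_mem d)
  rw [add_comm e d] at h2
  have := Submodule.add_mem _ h1 h2
  rw [mon_add]
  convert this using 1
  ring

lemma dimVec_zero (l : ℤ) : dimVec r l 0 = 0 := by
  funext v; simp [dimVec]

lemma dimVec_succ (l : ℤ) (n : ℕ) :
    dimVec r l (n + 1) = dimVec r l n + Pi.single ((l + n : ℤ) : ZMod r) 1 := by
  funext v
  simp only [dimVec, Finset.range_add_one, Finset.filter_insert, Pi.add_apply, Pi.single_apply]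
  push_cast
  by_cases h : (l : ZMod r) + n = v
  · rw [if_pos h, if_pos h.symm, Finset.card_insert_of_notMem (by simp)]
  · rw [if_neg h, if_neg (fun hb => h hb.symm), add_zero]

lemma mon_single [NeZero r] (v : ZMod r) : mon r (Pi.single v 1) = yv r v := by
  unfold mon
  rw [Finset.prod_eq_single v]
  · simp
  · intro b _ hb; simp [hb]
  · simp

lemma lead_Xgcv [NeZero r] (l : ℤ) (n : ℕ) :
    Xgcv r l n - mon r (dimVec r l n) ∈ ltSpan r (dimVec r l n) := by
  induction n using Nat.twoStepInduction with
  | zero => simp [dimVec_zero, mon, Xgcv]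
  | one =>
    rw [dimVec_succ, dimVec_zero, zero_add, mon_single, Xgcv_one]
    simp
  | more n h0 h1 =>
    have hs : Xgcv r (l + n + 1) 1 - mon r (Pi.single ((l + (n + 1 : ℕ) : ℤ) : ZMod r) 1) ∈
        ltSpan r (Pi.single ((l + (n + 1 : ℕ) : ℤ) : ZMod r) 1) := by
      rw [mon_single, Xgcv_one]
      push_cast
      simp [add_assoc]
    have h2 := lead_mul h1 hs
    rw [← dimVec_succ] at h2
    have hlt : dimVec r l n < dimVec r l (n + 1 + 1) := by
      rw [dimVec_succ, dimVec_succ, add_assoc]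
      refine lt_add_of_pos_right _ (add_pos_of_pos_of_nonneg ?_ zero_le)
      simp
    have h3 := leSpan_le_ltSpan hlt (mem_leSpan h0)
    have := Submodule.sub_mem _ h2 h3
    rw [Xgcv_rec]
    convert this using 1
    ring

lemma dimMul_cons (p : ℤ × ℕ) (S : Multiset (ℤ × ℕ)) :
    dimMul r (p ::ₘ S) = dimVec r p.1 p.2 + dimMul r S := by
  funext v; simp [dimMul]

lemma lead_XMul [NeZero r] (S : Multiset (ℤ × ℕ)) :
    XMul r S - mon r (dimMul r S) ∈ ltSpan r (dimMul r S) := by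
  induction S using Multiset.induction_on with
  | empty => simp [XMul, dimMul, mon]
  | cons p S ih =>
    have := lead_mul (lead_Xgcv p.1 p.2) ih
    rw [dimMul_cons]
    simpa [XMul] using this

/-- the semisimple of dimension vector `e` -/
noncomputable def ss (r : ℕ) [NeZero r] (e : ZMod r → ℕ) : Multiset (ℤ × ℕ) :=
  ∑ v, e v • ({(rep r v, 1)} : Multiset (ℤ × ℕ))

lemma ss_adm [NeZero r] (e : ZMod r → ℕ) : Admissible r (ss r e) := by
  intro p hp
  rw [ss, Multiset.mem_sum] at hp
  obtain ⟨v, -, hv⟩ := hp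
  have := Multiset.mem_of_mem_nsmul hv
  rw [Multiset.mem_singleton] at this
  subst this
  exact ⟨(rep_bounds v).1, (rep_bounds v).2, le_refl _⟩

lemma XMul_ss [NeZero r] (e : ZMod r → ℕ) : XMul r (ss r e) = mon r e := by
  have h : ∀ s : Finset (ZMod r),
      XMul r (∑ v ∈ s, e v • ({(rep r v, 1)} : Multiset (ℤ × ℕ))) = ∏ v ∈ s, yv r v ^ e v := by
    intro s
    induction s using Finset.induction_on with
    | empty => simp [XMul]
    | insert a s ha ih =>
      rw [Finset.sum_insert ha, Finset.prod_insert ha, ← ih]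
      simp [XMul, Multiset.map_nsmul, Multiset.prod_nsmul, yv]
  exact h _

lemma dimMul_ss [NeZero r] (e : ZMod r → ℕ) : dimMul r (ss r e) = e := by
  have h : ∀ s : Finset (ZMod r),
      dimMul r (∑ v ∈ s, e v • ({(rep r v, 1)} : Multiset (ℤ × ℕ)))
        = ∑ v ∈ s, Pi.single v (e v) := by
    intro s
    induction s using Finset.induction_on with
    | empty => funext v; simp [dimMul]
    | insert a s ha ih =>
      rw [Finset.sum_insert ha, Finset.sum_insert ha, ← ih]
      funext v
      have := congrFun (dimVec_succ (r := r) (rep r a) 0) v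
      simp only [dimVec_zero, Nat.cast_zero, add_zero, zero_add, rep_cast] at this
      simp [dimMul, Multiset.map_nsmul, Multiset.sum_nsmul, this, Pi.single_apply]
  rw [ss, h, Finset.univ_sum_single]

end helpers

/-- if two admissible multisets `S`, `T` have the same dimension vector, then
`X_S = X_T + Σ_t a_t · X_{R_t}` for finitely many admissible multisets `R_t` whose dimension
vectors are strictly smaller than that of `T`, and integers `a_t`. -/
theorem stmt13 (r : ℕ) (hr : 1 ≤ r) (S T : Multiset (ℤ × ℕ))
    (hS : Admissible r S) (hT : Admissible r T) (hd : dimMul r S = dimMul r T) :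
    ∃ (N : ℕ) (R : Fin N → Multiset (ℤ × ℕ)) (a : Fin N → ℤ),
      (∀ t, Admissible r (R t)) ∧
      (∀ t, DimLT r (dimMul r (R t)) (dimMul r T)) ∧
      XMul r S = XMul r T + ∑ t, a t • XMul r (R t) := by
  have : NeZero r := ⟨by omega⟩
  have h1 := lead_XMul (r := r) S
  have h2 := lead_XMul (r := r) T
  rw [hd] at h1
  have h3 := Submodule.sub_mem _ h1 h2
  rw [ltSpan, Submodule.mem_span_set'] at h3
  obtain ⟨N, a, g, hg⟩ := h3
  choose e he1 he2 using fun i => (g i).2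
  refine ⟨N, fun t => ss r (e t), a, fun t => ss_adm _, fun t => ?_, ?_⟩
  · rw [dimMul_ss]
    have h : e t < dimMul r T := he1 t
    exact ⟨fun v => h.le v, h.ne⟩
  · simp only [XMul_ss, he2]
    rw [hg]
    ring
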